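/- The matrix Stieltjes moment problem for the sequence (S_n) has a solution if and only if for every n ∈ ℕ both block Hankel matrices Γ_n = (S_{i+j})_{i,j=0}^n and Γ̃_n = (S_{i+j+1})_{i,j=0}^n are positive semidefinite. -/

import Mathlib

open scoped ComplexOrder

section ComplexMeasureIntegral

open MeasureTheory

/-- The integral of a complex-valued function against a complex (Borel) measure,
defined via the Jordan decompositions of the real and imaginary parts. -/
noncomputable def cmIntegral (μ : ComplexMeasure ℝ) (f : ℝ → ℂ) : ℂ :=
  ((∫ t, f t ∂(ComplexMeasure.re μ).toJordanDecomposition.posPart) -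
      ∫ t, f t ∂(ComplexMeasure.re μ).toJordanDecomposition.negPart) +
    Complex.I •
      ((∫ t, f t ∂(ComplexMeasure.im μ).toJordanDecomposition.posPart) -
        ∫ t, f t ∂(ComplexMeasure.im μ).toJordanDecomposition.negPart)

/-- Integrability with respect to (the total variation of) a complex measure. -/
def cmIntegrableWrt (μ : ComplexMeasure ℝ) (f : ℝ → ℂ) : Prop :=
  Integrable f (ComplexMeasure.re μ).toJordanDecomposition.posPart ∧
    Integrable f (ComplexMeasure.re μ).toJordanDecomposition.negPart ∧
    Integrable f (ComplexMeasure.im μ).toJordanDecomposition.posPart ∧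
    Integrable f (ComplexMeasure.im μ).toJordanDecomposition.negPart

end ComplexMeasureIntegral

/-- A solution of the matrix Stieltjes moment problem for a sequence `S` of Hermitian
`N×N` complex matrices: a family `μ k l` of finite complex Borel measures on `[0,∞)`
(realized as complex measures on `ℝ` vanishing on subsets of `(-∞,0)`) such that for
every vector `v ∈ ℂᴺ` the complex measure `∑ₖₗ vₖ conj(vₗ) μ k l` is a non-negative
measure, the functions `x ↦ xⁿ` are integrable, and `∫_{[0,∞)} xⁿ dμ k l = (S n) k l`. -/
structure IsStieltjesSolution (N : ℕ) (S : ℕ → Matrix (Fin N) (Fin N) ℂ)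
    (μ : Fin N → Fin N → MeasureTheory.ComplexMeasure ℝ) : Prop where
  concentrated : ∀ (k l : Fin N) (s : Set ℝ), MeasurableSet s → s ⊆ Set.Iio 0 → μ k l s = 0
  nonneg : ∀ (v : Fin N → ℂ) (s : Set ℝ), MeasurableSet s →
    0 ≤ ∑ k, ∑ l, v k * (starRingEnd ℂ) (v l) * μ k l s
  integrable : ∀ (n : ℕ) (k l : Fin N),
    cmIntegrableWrt (μ k l) ((Set.Ici (0 : ℝ)).indicator fun t => (t : ℂ) ^ n)
  moment : ∀ (n : ℕ) (k l : Fin N),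
    cmIntegral (μ k l) ((Set.Ici (0 : ℝ)).indicator fun t => (t : ℂ) ^ n) = S n k l

/-!
Necessity: write the solution as `H dσ` with a scalar measure `σ` on `[0, ∞)` and a positive
semidefinite matrix density `H`. With `a(t) = (1, t, …, tⁿ)`, the matrices `Γ n` and `Γ̃ n` are the
integrals of `t ^ q • (a(t) a(t)*) ⊗ H(t)` for `q = 0, 1`, hence positive semidefinite.

Sufficiency: positivity forces `ker Γ n ⊆ ker Γ̃ n`, so that multiplication by `t`, compressed to
polynomials of degree at most `n`, becomes the positive semidefinite matrix
`A = Γ^(-1/2) Γ̃ Γ^(-1/2)`, with `S p = B* A ^ p B` for `p ≤ 2 n`. Diagonalizing `A` solves the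
truncated problem by finitely many atoms `δ_t u u*`. These are read as a scalar measure on pairs
`(t, u)` with `‖u‖ ≤ 1`, whose `p`-th absolute moment is the trace of `S p`. The traces of `S 0` and
`S 1` give tightness and thus a weak limit along an ultrafilter, and the trace of `S (2 p)` lets the
`p`-th moments pass to that limit. Disintegrating the limit along `t` yields `H` and `σ`.
-/

section MatrixAlgebra
open Matrix

variable {m n o 𝕜 : Type*} [Fintype n] [RCLike 𝕜]

open scoped MatrixOrder in
lemma submatrix_id_mul_eq_zero_of_posSemidef [Finite m] {M : Matrix m m 𝕜} (hM : M.PosSemidef)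
    {f : n → m} {C : Matrix n o 𝕜} (hC : M.submatrix f f * C = 0) :
    M.submatrix id f * C = 0 := by
  classical
  have := Fintype.ofFinite m
  obtain ⟨R, rfl⟩ := CStarAlgebra.nonneg_iff_eq_star_mul_self.mp hM.nonneg
  have hRC : (R.submatrix id f)ᴴ * R.submatrix id f * C = 0 := hC
  rw [conjTranspose_mul_self_mul_eq_zero] at hRC
  have hsub : (star R * R).submatrix id f = star R * R.submatrix id f := rfl
  rw [hsub, Matrix.mul_assoc, hRC, Matrix.mul_zero]

open scoped MatrixOrder in
lemma exists_posSemidef_compression {Γ Γ' : Matrix n n 𝕜} (hΓ : Γ.PosSemidef)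
    (hΓ' : Γ'.PosSemidef) (hker : ∀ C : Matrix n n 𝕜, Γ * C = 0 → Γ' * C = 0) :
    ∃ A G P : Matrix n n 𝕜, A.PosSemidef ∧ Gᴴ * G = Γ ∧ P * Γ = G ∧ A * G = P * Γ' := by
  classical
  have hcont (f : ℝ → ℝ) : ContinuousOn f (spectrum ℝ Γ) := Γ.finite_real_spectrum.continuousOn f
  have hid : cfc (fun x : ℝ => x) Γ = Γ := cfc_id' ℝ Γ hΓ.1.isSelfAdjoint
  have hmul (f g : ℝ → ℝ) : cfc f Γ * cfc g Γ = cfc (fun x => f x * g x) Γ :=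
    (cfc_mul f g Γ (hcont f) (hcont g)).symm
  have hherm (f : ℝ → ℝ) : (cfc f Γ)ᴴ = cfc f Γ := cfc_predicate f Γ
  have hcongr {f g : ℝ → ℝ} (hfg : ∀ x, 0 ≤ x → f x = g x) : cfc f Γ = cfc g Γ :=
    cfc_congr fun x hx => hfg x (spectrum_nonneg_of_nonneg hΓ.nonneg hx)
  -- `P` is the pseudo-inverse of `G = Γ ^ (1 / 2)`, since `(√0)⁻¹ = 0`.
  set G := cfc (fun x : ℝ => √x) Γ
  set P := cfc (fun x : ℝ => (√x)⁻¹) Γ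
  have hGG : G * G = Γ := by
    rw [hmul, hcongr fun x hx => Real.mul_self_sqrt hx, hid]
  have hPΓ : P * Γ = G := by
    calc P * Γ = P * cfc (fun x : ℝ => x) Γ := by rw [hid]
      _ = G := by
        rw [hmul]
        exact hcongr fun x _ => by rw [inv_mul_eq_div, Real.div_sqrt]
  have hGPG : G * (P * G) = G := by
    rw [hmul, hmul]
    exact hcongr fun x _ => by rw [← mul_assoc, mul_inv_mul_cancel]
  have hΓ'PG : Γ' * (P * G) = Γ' := by
    have hzero : Γ * (P * G - 1) = 0 := by
      rw [← hGG, mul_assoc, mul_sub, hGPG, mul_one, sub_self, mul_zero]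
    simpa only [mul_sub, mul_one, sub_eq_zero] using hker _ hzero
  refine ⟨P * Γ' * P, G, P, ?_, ?_, hPΓ, ?_⟩
  · simpa only [P, hherm] using hΓ'.mul_mul_conjTranspose_same P
  · rw [hherm, hGG]
  · rw [mul_assoc, mul_assoc, hΓ'PG]

lemma conjTranspose_mul_pow_mul_eq_sum [DecidableEq n] {A : Matrix n n 𝕜} (hA : A.PosSemidef)
    (B : Matrix n m 𝕜) :
    ∃ (lam : n → ℝ) (w : n → m → 𝕜), (∀ a, 0 ≤ lam a) ∧
      ∀ p, Bᴴ * A ^ p * B = ∑ a, lam a ^ p • vecMulVec (w a) (star (w a)) := by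
  let U := (hA.1.eigenvectorUnitary : Matrix n n 𝕜)
  refine ⟨hA.1.eigenvalues, fun a k => star ((Uᴴ * B) a k), hA.eigenvalues_nonneg, fun p => ?_⟩
  have hpow : A ^ p = U * diagonal (fun a => (hA.1.eigenvalues a : 𝕜) ^ p) * Uᴴ := by
    conv_lhs => rw [hA.1.spectral_theorem, ← map_pow, diagonal_pow]
    rfl
  have hconj : Bᴴ * A ^ p * B =
      (Uᴴ * B)ᴴ * diagonal (fun a => (hA.1.eigenvalues a : 𝕜) ^ p) * (Uᴴ * B) := by
    simp only [hpow, conjTranspose_mul, conjTranspose_conjTranspose, Matrix.mul_assoc]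
  ext k l
  rw [hconj, mul_apply, Matrix.sum_apply]
  refine Finset.sum_congr rfl fun a _ => ?_
  simp only [mul_diagonal, conjTranspose_apply, Matrix.smul_apply, vecMulVec_apply, Pi.star_apply,
    star_star, RCLike.real_smul_eq_coe_mul, RCLike.ofReal_pow]
  ring

end MatrixAlgebra

section BlockHankel
open Matrix

/-- The block Hankel matrix `(S (i + j))` with `n` block rows and `n` block columns, so that
`Γ n` of the moment problem is `blockHankel S (n + 1)`. -/
def blockHankel {ι α : Type*} (S : ℕ → Matrix ι ι α) (n : ℕ) :
    Matrix (Fin n × ι) (Fin n × ι) α :=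
  Matrix.of fun p q => S (p.1 + q.1) p.2 q.2

variable {ι m 𝕜 : Type*} [Fintype ι] [RCLike 𝕜] {S : ℕ → Matrix ι ι 𝕜} {n : ℕ}

lemma blockHankel_shift_mul_eq_zero (hS : (blockHankel S (n + 1)).PosSemidef)
    {C : Matrix (Fin n × ι) m 𝕜} (hC : blockHankel S n * C = 0) :
    blockHankel (fun p => S (p + 1)) n * C = 0 := by
  have hzero : (blockHankel S (n + 1)).submatrix id (Prod.map Fin.castSucc id) * C = 0 :=
    submatrix_id_mul_eq_zero_of_posSemidef hS hC
  have hshift : (blockHankel S (n + 1)).submatrix (Prod.map Fin.succ id)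
      (Prod.map Fin.castSucc id) = blockHankel (fun p => S (p + 1)) n := by
    ext p q
    simp [blockHankel, add_right_comm]
  rw [← hshift]
  exact congrArg (fun M => M.submatrix (Prod.map Fin.succ id) id) hzero

lemma exists_conjTranspose_mul_pow_mul_eq [DecidableEq ι]
    (hS : ∀ n, (blockHankel S n).PosSemidef)
    (hS' : ∀ n, (blockHankel (fun p => S (p + 1)) n).PosSemidef) (n : ℕ) :
    ∃ (A : Matrix (Fin (n + 1) × ι) (Fin (n + 1) × ι) 𝕜) (B : Matrix (Fin (n + 1) × ι) ι 𝕜),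
      A.PosSemidef ∧ ∀ p ≤ 2 * n, S p = Bᴴ * A ^ p * B := by
  obtain ⟨A, G, P, hA, hGG, hPΓ, hAG⟩ := exists_posSemidef_compression (hS (n + 1)) (hS' (n + 1))
    fun C => blockHankel_shift_mul_eq_zero (hS (n + 2))
  let col (j : Fin (n + 1)) : Matrix (Fin (n + 1) × ι) ι 𝕜 := G.submatrix id (Prod.mk j)
  have hcol (i : Fin n) : A * col i.castSucc = col i.succ := by
    change (A * G).submatrix id _ = G.submatrix id _
    rw [hAG, ← hPΓ]
    ext a k
    simp [mul_apply, blockHankel, add_assoc]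
  have hpow (i : Fin (n + 1)) : A ^ (i : ℕ) * col 0 = col i := by
    induction i using Fin.induction with
    | zero => simp
    | succ i ih =>
      rw [← hcol, ← ih, ← Matrix.mul_assoc, Fin.val_succ, pow_succ', Fin.val_castSucc]
  refine ⟨A, col 0, hA, fun p hp => ?_⟩
  obtain ⟨i, j, rfl⟩ : ∃ i j : Fin (n + 1), p = i + j :=
    ⟨⟨p / 2, by omega⟩, ⟨p - p / 2, by omega⟩, (Nat.add_sub_of_le (Nat.div_le_self p 2)).symm⟩
  calc S (i + j) = (col i)ᴴ * col j := by
        ext k l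
        exact congrFun₂ hGG.symm (i, k) (j, l)
    _ = (col 0)ᴴ * A ^ (i + j : ℕ) * col 0 := by
        rw [← hpow i, ← hpow j, conjTranspose_mul, conjTranspose_pow, hA.1.eq, pow_add]
        simp only [Matrix.mul_assoc]

end BlockHankel

section Atoms
open MeasureTheory Matrix
open scoped NNReal ENNReal

/-- Parameter space of the atoms `δ_t u u*` with `t ≥ 0` and `‖u‖ ≤ 1`: scalar measures on it
represent `[0, ∞)`-supported matrix measures. -/
abbrev AtomSpace (ι : Type*) [Fintype ι] : Type _ :=
  ℝ≥0 × Metric.closedBall (0 : EuclideanSpace ℂ ι) 1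

variable {ι : Type*} [Fintype ι]

/-- The `p`-th moment of the atom `δ_t u u*`, as a function of the atom. -/
def atomMoment (p : ℕ) (x : AtomSpace ι) : Matrix ι ι ℂ :=
  ((x.1 : ℂ) ^ p) • vecMulVec x.2.1 (star x.2.1)

lemma exists_norm_smul_eq (w : EuclideanSpace ℂ ι) :
    ∃ u : Metric.closedBall (0 : EuclideanSpace ℂ ι) 1, ‖w‖ • u.1 = w := by
  refine ⟨⟨‖w‖⁻¹ • w, ?_⟩, ?_⟩
  · rw [mem_closedBall_zero_iff, norm_smul, norm_inv, norm_norm]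
    exact inv_mul_le_one
  · by_cases hw : w = 0
    · simp [hw]
    · exact smul_inv_smul₀ (norm_ne_zero_iff.mpr hw) w

lemma exists_measure_of_atoms {α : Type*} [Fintype α] (lam : α → ℝ≥0)
    (w : α → EuclideanSpace ℂ ι) :
    ∃ ν : FiniteMeasure (AtomSpace ι), ∀ p,
      (∀ k l, ∫ x, atomMoment p x k l ∂ν = ∑ a, (lam a : ℂ) ^ p * (w a k * star (w a l))) ∧
      ∫⁻ x, ↑(x.1 ^ p) ∂(ν : Measure (AtomSpace ι)) = ∑ a, (lam a : ℝ≥0∞) ^ p * ‖w a‖ₑ ^ 2 := by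
  choose u hu using fun a => exists_norm_smul_eq (w a)
  have hcoord (a : α) (k : ι) : (‖w a‖ : ℂ) * (u a).1 k = w a k := by
    conv_rhs => rw [← hu a]
    simp
  let ν : Measure (AtomSpace ι) := ∑ a, (‖w a‖₊ ^ 2) • Measure.dirac (lam a, u a)
  refine ⟨⟨ν, inferInstance⟩, fun p => ⟨fun k l => ?_, ?_⟩⟩
  · change ∫ x, atomMoment p x k l ∂ν = _
    rw [integral_finsetSum_measure fun a _ => (integrable_dirac (by simp)).smul_measure_nnreal]
    refine Finset.sum_congr rfl fun a _ => ?_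
    rw [integral_smul_nnreal_measure, integral_dirac]
    simp only [atomMoment, Matrix.smul_apply, vecMulVec_apply, Pi.star_apply, RCLike.star_def,
      smul_eq_mul, NNReal.smul_def, NNReal.coe_pow, coe_nnnorm, Complex.real_smul,
      Complex.ofReal_pow, ← hcoord, star_mul', Complex.conj_ofReal]
    ring
  · change ∫⁻ x, ↑(x.1 ^ p) ∂ν = _
    rw [lintegral_finsetSum_measure]
    refine Finset.sum_congr rfl fun a _ => ?_
    rw [lintegral_smul_measure, lintegral_dirac, mul_comm, ENNReal.smul_def]
    simp [enorm_eq_nnnorm]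

lemma exists_measure_of_posSemidef_blockHankel {S : ℕ → Matrix ι ι ℂ}
    (hS : ∀ n, (blockHankel S n).PosSemidef)
    (hS' : ∀ n, (blockHankel (fun p => S (p + 1)) n).PosSemidef) (n : ℕ) :
    ∃ ν : FiniteMeasure (AtomSpace ι), ∀ p ≤ n,
      (∀ k l, ∫ x, atomMoment p x k l ∂ν = S p k l) ∧
      ∫⁻ x, ↑(x.1 ^ p) ∂(ν : Measure (AtomSpace ι)) = ENNReal.ofReal (S p).trace.re := by
  classical
  obtain ⟨A, B, hA, hAB⟩ := exists_conjTranspose_mul_pow_mul_eq hS hS' n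
  obtain ⟨lam, w, hlam, hw⟩ := conjTranspose_mul_pow_mul_eq_sum hA B
  lift lam to Fin (n + 1) × ι → ℝ≥0 using hlam
  have hSw (p : ℕ) (hp : p ≤ n) (k l : ι) :
      S p k l = ∑ a, (lam a : ℂ) ^ p * (w a k * star (w a l)) := by
    simp [hAB p (by omega), hw, Matrix.sum_apply, vecMulVec_apply]
  obtain ⟨ν, hν⟩ := exists_measure_of_atoms lam fun a => WithLp.toLp 2 (w a)
  refine ⟨ν, fun p hp => ⟨fun k l => ?_, ?_⟩⟩
  · rw [(hν p).1, hSw p hp]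
  · rw [(hν p).2]
    have hnorm (a) : ∑ k, w a k * star (w a k) = (‖WithLp.toLp 2 (w a)‖ ^ 2 : ℝ) := by
      simp [EuclideanSpace.norm_sq_eq, Complex.mul_conj, Complex.normSq_eq_norm_sq]
    have htrace : (S p).trace = (∑ a, (lam a : ℝ) ^ p * ‖WithLp.toLp 2 (w a)‖ ^ 2 : ℝ) := by
      simp only [trace, diag_apply, hSw p hp]
      rw [Finset.sum_comm]
      simp_rw [← Finset.mul_sum, hnorm]
      push_cast
      rfl
    rw [htrace, Complex.ofReal_re, ENNReal.ofReal_sum_of_nonneg fun a _ => by positivity]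
    refine Finset.sum_congr rfl fun a _ => ?_
    rw [ENNReal.ofReal_mul (by positivity)]
    simp [ENNReal.ofReal_pow]

end Atoms

section SquareDomination
open MeasureTheory BoundedContinuousFunction
open scoped NNReal ENNReal

variable {X E : Type*} [NormedAddCommGroup E] {f : X → E} {h : X → ℝ≥0}

section Measure

variable [MeasurableSpace X] {μ : Measure X}

lemma integrable_of_lintegral_sq_lt_top [IsFiniteMeasure μ]
    (hf : AEStronglyMeasurable f μ) (hfh : ∀ x, ‖f x‖₊ ≤ h x) (hμ : ∫⁻ x, ↑(h x ^ 2) ∂μ < ∞) :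
    Integrable f μ := by
  refine MemLp.integrable one_le_two ⟨hf, ?_⟩
  rw [eLpNorm_lt_top_iff_lintegral_rpow_enorm_lt_top two_ne_zero ENNReal.ofNat_ne_top]
  refine (lintegral_mono fun x => ?_).trans_lt hμ
  simp only [ENNReal.toReal_ofNat, ENNReal.rpow_ofNat]
  rw [enorm_eq_nnnorm]
  exact_mod_cast pow_le_pow_left' (hfh x) 2

lemma dist_integral_le_of_lintegral_sq_le [NormedSpace ℝ E] {g : X → E} (hf : Integrable f μ)
    (hg : Integrable g μ) {ε C : ℝ≥0} (hfg : ∀ x, ‖f x - g x‖₊ ≤ ε * h x ^ 2)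
    (hC : ∫⁻ x, ↑(h x ^ 2) ∂μ ≤ C) : dist (∫ x, f x ∂μ) (∫ x, g x ∂μ) ≤ ε * C := by
  rw [dist_eq_norm, ← integral_sub hf hg, ← coe_nnnorm, ← NNReal.coe_mul, NNReal.coe_le_coe,
    ← ENNReal.coe_le_coe, ENNReal.coe_mul]
  calc ‖∫ x, f x - g x ∂μ‖ₑ ≤ ∫⁻ x, ‖f x - g x‖ₑ ∂μ := enorm_integral_le_lintegral_enorm _
    _ ≤ ∫⁻ x, ε * ↑(h x ^ 2) ∂μ := lintegral_mono fun x => by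
        rw [enorm_eq_nnnorm, ← ENNReal.coe_mul]
        exact ENNReal.coe_le_coe.mpr (hfg x)
    _ = ε * ∫⁻ x, ↑(h x ^ 2) ∂μ := lintegral_const_mul' _ _ ENNReal.coe_ne_top
    _ ≤ ε * C := by gcongr

end Measure

lemma exists_boundedContinuous_norm_sub_le [TopologicalSpace X] [NormedSpace ℝ E]
    (hf : Continuous f) (hh : Continuous h) (hfh : ∀ x, ‖f x‖₊ ≤ h x) {ε : ℝ≥0} (hε : 0 < ε) :
    ∃ g : X →ᵇ E, ∀ x, ‖f x - g x‖₊ ≤ ε * h x ^ 2 := by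
  let c (x : X) : ℝ≥0 := (1 + ε * h x)⁻¹
  have hc (x : X) : c x + ε * h x * c x = 1 := by
    rw [← one_add_mul, mul_inv_cancel₀ (by positivity)]
  have hcc : Continuous c := Continuous.inv₀ (by fun_prop) fun x => by positivity
  have hbound (x : X) : ‖c x • f x‖ ≤ ε⁻¹ := by
    rw [NNReal.smul_def, norm_smul, NNReal.norm_eq]
    have : c x * ‖f x‖₊ ≤ ε⁻¹ := by
      rw [NNReal.le_inv_iff_mul_le hε.ne']
      calc c x * ‖f x‖₊ * ε ≤ c x * h x * ε := by gcongr; exact hfh x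
        _ = ε * h x * c x := by ring
        _ ≤ 1 := le_add_self.trans_eq (hc x)
    exact_mod_cast this
  refine ⟨.ofNormedAddCommGroup (fun x => c x • f x) (by fun_prop) ε⁻¹ hbound, fun x => ?_⟩
  have hsub : f x - c x • f x = (ε * h x * c x) • f x := by
    rw [sub_eq_iff_eq_add', ← add_smul, hc, one_smul]
  have hc_le : c x ≤ 1 := le_self_add.trans_eq (hc x)
  calc ‖f x - c x • f x‖₊ = ε * h x * c x * ‖f x‖₊ := by
        rw [hsub, NNReal.smul_def, nnnorm_smul, NNReal.nnnorm_eq]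
    _ ≤ ε * h x * 1 * h x := by gcongr; exact hfh x
    _ = ε * h x ^ 2 := by ring

end SquareDomination

section WeakLimits
open MeasureTheory Filter Topology BoundedContinuousFunction
open scoped NNReal ENNReal

variable {X ι : Type*} [TopologicalSpace X] [MeasurableSpace X] {ν : ι → FiniteMeasure X}
  {ρ : FiniteMeasure X} {F : Filter ι}

lemma lintegral_le_of_tendsto_finiteMeasure [OpensMeasurableSpace X] [F.NeBot]
    (hν : Tendsto ν F (𝓝 ρ)) {g : X → ℝ≥0} (hg : Continuous g) {C : ℝ≥0∞}
    (hC : ∀ᶠ i in F, ∫⁻ x, g x ∂(ν i : Measure X) ≤ C) :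
    ∫⁻ x, g x ∂(ρ : Measure X) ≤ C := by
  let trunc (R : ℕ) : X →ᵇ ℝ≥0 :=
    .mkOfBound ⟨fun x => min (g x) R, by fun_prop⟩ R fun x y =>
      abs_sub_le_of_nonneg_of_le (NNReal.coe_nonneg _) (NNReal.coe_le_coe.mpr (min_le_right _ _))
        (NNReal.coe_nonneg _) (NNReal.coe_le_coe.mpr (min_le_right _ _))
  have htrunc (R : ℕ) : ∫⁻ x, trunc R x ∂(ρ : Measure X) ≤ C := by
    refine le_of_tendsto (FiniteMeasure.tendsto_iff_forall_lintegral_tendsto.mp hν (trunc R)) ?_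
    filter_upwards [hC] with i hi
    refine (lintegral_mono fun x => ?_).trans hi
    exact ENNReal.coe_le_coe.mpr (min_le_left _ _)
  have hsup (x : X) : (g x : ℝ≥0∞) = ⨆ R : ℕ, (trunc R x : ℝ≥0∞) := by
    refine le_antisymm ?_ (iSup_le fun R => ENNReal.coe_le_coe.mpr (min_le_left _ _))
    obtain ⟨R, hR⟩ := exists_nat_ge (g x)
    exact le_iSup_of_le R (ENNReal.coe_le_coe.mpr (le_min le_rfl hR))
  simp_rw [hsup]
  rw [lintegral_iSup (fun R => by fun_prop)]
  · exact iSup_le htrunc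
  · intro R R' h x
    exact ENNReal.coe_le_coe.mpr (min_le_min le_rfl (by exact_mod_cast h))

lemma integrable_and_tendsto_integral_of_lintegral_sq_le [OpensMeasurableSpace X]
    {𝕜 : Type*} [RCLike 𝕜] [F.NeBot] (hν : Tendsto ν F (𝓝 ρ)) {f : X → 𝕜} {h : X → ℝ≥0}
    (hf : Continuous f) (hh : Continuous h) (hfh : ∀ x, ‖f x‖₊ ≤ h x) {C : ℝ≥0}
    (hC : ∀ᶠ i in F, ∫⁻ x, ↑(h x ^ 2) ∂(ν i : Measure X) ≤ C) :
    Integrable f (ρ : Measure X) ∧ Tendsto (fun i => ∫ x, f x ∂ν i) F (𝓝 (∫ x, f x ∂ρ)) := by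
  have hCρ := lintegral_le_of_tendsto_finiteMeasure hν (hh.pow 2) hC
  have hf_int {μ : FiniteMeasure X} (hμ : ∫⁻ x, ↑(h x ^ 2) ∂(μ : Measure X) ≤ C) :
      Integrable f (μ : Measure X) :=
    integrable_of_lintegral_sq_lt_top hf.aestronglyMeasurable hfh (hμ.trans_lt ENNReal.coe_lt_top)
  refine ⟨hf_int hCρ, Metric.tendsto_nhds.mpr fun δ hδ => ?_⟩
  obtain ⟨ε, hε, hεδ⟩ : ∃ ε : ℝ≥0, 0 < ε ∧ ε * C + δ / 2 + ε * C ≤ δ := by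
    refine ⟨(δ / 4 / (C + 1)).toNNReal, Real.toNNReal_pos.mpr (by positivity), ?_⟩
    rw [Real.coe_toNNReal _ (by positivity)]
    have : δ / 4 / (C + 1) * C ≤ δ / 4 := by
      rw [div_mul_eq_mul_div, div_le_iff₀ (by positivity)]
      gcongr
      exact (lt_add_one _).le
    linarith
  obtain ⟨g, hg⟩ := exists_boundedContinuous_norm_sub_le hf hh hfh hε
  have hlim := (FiniteMeasure.tendsto_iff_forall_integral_rclike_tendsto 𝕜).mp hν g
  filter_upwards [hC, Metric.tendsto_nhds.mp hlim (δ / 2) (half_pos hδ)] with i hi hgi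
  have hfg_ν := dist_integral_le_of_lintegral_sq_le (hf_int hi) (g.integrable _) hg hi
  have hfg_ρ := dist_integral_le_of_lintegral_sq_le (hf_int hCρ) (g.integrable _) hg hCρ
  rw [dist_comm] at hfg_ρ
  linarith [dist_triangle4 (∫ x, f x ∂ν i) (∫ x, g x ∂ν i) (∫ x, g x ∂ρ) (∫ x, f x ∂ρ)]

lemma exists_ultrafilter_tendsto_of_lintegral_le [BorelSpace X] [T2Space X] [F.NeBot] {h : X → ℝ≥0}
    (hh : Continuous h) (hcompact : ∀ r, IsCompact {x | h x ≤ r}) {C₀ C₁ : ℝ≥0}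
    (hC₀ : ∀ᶠ i in F, (ν i).mass ≤ C₀)
    (hC₁ : ∀ᶠ i in F, ∫⁻ x, h x ∂(ν i : Measure X) ≤ C₁) :
    ∃ (U : Ultrafilter ι) (ρ : FiniteMeasure X), U ≤ F ∧ Tendsto ν U (𝓝 ρ) := by
  let u (j : ℕ) : ℝ≥0 := C₁ / (j + 1)
  have hu : Tendsto u atTop (𝓝 0) := by
    rw [← NNReal.tendsto_coe]
    simpa [u, div_eq_mul_inv] using
      (tendsto_one_div_add_atTop_nhds_zero_nat (𝕜 := ℝ)).const_mul (C₁ : ℝ)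
  have hK := isCompact_setOfPred_finiteMeasure_mass_le_compl_isCompact_le C₀ hu
    (fun j => hcompact (j + 1)) (Or.inr fun i j hij x (hx : h x ≤ i + 1) => hx.trans (by gcongr))
  have hmem : ∀ᶠ i in F, ν i ∈ {μ : FiniteMeasure X | μ.mass ≤ C₀ ∧
      ∀ j : ℕ, μ {x | h x ≤ j + 1}ᶜ ≤ u j} := by
    filter_upwards [hC₀, hC₁] with i h₀ h₁
    refine ⟨h₀, fun j => ?_⟩
    have hsubset : {x | h x ≤ j + 1}ᶜ ⊆ {x | (j + 1 : ℝ≥0∞) ≤ h x} := by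
      intro x hx
      have hlt : (j + 1 : ℝ≥0) < h x := not_le.mp hx
      exact_mod_cast (ENNReal.coe_lt_coe.mpr hlt).le
    rw [← ENNReal.coe_le_coe, FiniteMeasure.ennreal_coeFn_eq_coeFn_toMeasure,
      ENNReal.coe_div (by positivity)]
    calc (ν i : Measure X) {x | h x ≤ j + 1}ᶜ
        ≤ (∫⁻ x, h x ∂(ν i : Measure X)) / (j + 1) := (measure_mono hsubset).trans <|
          meas_ge_le_lintegral_div (by fun_prop) (by positivity) (by finiteness)
      _ ≤ C₁ / (j + 1 : ℝ≥0) := by push_cast; gcongr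
  obtain ⟨ρ, -, hρ⟩ := hK.exists_mapClusterPt (f := F) (u := ν) (le_principal_iff.mpr hmem)
  obtain ⟨U, hU, hνU⟩ := mapClusterPt_iff_ultrafilter.mp hρ
  exact ⟨U, ρ, hU, hνU⟩

end WeakLimits

section MomentLimit
open MeasureTheory Filter Topology Matrix
open scoped NNReal ENNReal

variable {ι : Type*} [Fintype ι]

lemma continuous_atomMoment (p : ℕ) (k l : ι) : Continuous fun x => atomMoment p x k l := by
  simp only [atomMoment, Matrix.smul_apply, vecMulVec_apply, Pi.star_apply]
  fun_prop

lemma nnnorm_atomMoment_le (p : ℕ) (x : AtomSpace ι) (k l : ι) :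
    ‖atomMoment p x k l‖₊ ≤ x.1 ^ p := by
  have hcoord (j : ι) : ‖x.2.1 j‖₊ ≤ 1 :=
    (PiLp.nnnorm_apply_le x.2.1 j).trans (mem_closedBall_zero_iff.mp x.2.2)
  calc ‖atomMoment p x k l‖₊ = x.1 ^ p * (‖x.2.1 k‖₊ * ‖x.2.1 l‖₊) := by
        simp [atomMoment, vecMulVec_apply]
    _ ≤ x.1 ^ p * (1 * 1) := by gcongr <;> exact hcoord _
    _ = x.1 ^ p := by simp only [mul_one]

lemma isCompact_setOf_fst_le (r : ℝ≥0) : IsCompact {x : AtomSpace ι | x.1 ≤ r} := by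
  have hprod : {x : AtomSpace ι | x.1 ≤ r} = Set.Icc 0 r ×ˢ Set.univ := by
    ext x
    simp
  rw [hprod]
  exact isCompact_Icc.prod isCompact_univ

lemma exists_measure_forall_integral_atomMoment_eq {S : ℕ → Matrix ι ι ℂ}
    (hS : ∀ n, (blockHankel S n).PosSemidef)
    (hS' : ∀ n, (blockHankel (fun p => S (p + 1)) n).PosSemidef) :
    ∃ ρ : FiniteMeasure (AtomSpace ι), ∀ p k l,
      Integrable (fun x => atomMoment p x k l) (ρ : Measure (AtomSpace ι)) ∧
      ∫ x, atomMoment p x k l ∂ρ = S p k l := by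
  choose ν hν using exists_measure_of_posSemidef_blockHankel hS hS'
  have htrace (p : ℕ) : ∀ᶠ n in atTop,
      ∫⁻ x, ↑(x.1 ^ p) ∂(ν n : Measure (AtomSpace ι)) ≤ (S p).trace.re.toNNReal := by
    filter_upwards [eventually_ge_atTop p] with n hn
    exact (hν n p hn).2.le
  have hmass : ∀ᶠ n in atTop, (ν n).mass ≤ (S 0).trace.re.toNNReal := by
    filter_upwards [htrace 0] with n hn
    rw [← ENNReal.coe_le_coe, FiniteMeasure.ennreal_mass]
    simpa only [pow_zero, ENNReal.coe_one, lintegral_one] using hn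
  obtain ⟨U, ρ, hU, hlim⟩ := exists_ultrafilter_tendsto_of_lintegral_le (F := atTop) (ν := ν)
    (h := Prod.fst) continuous_fst isCompact_setOf_fst_le hmass
    (by simpa only [pow_one] using htrace 1)
  refine ⟨ρ, fun p k l => ?_⟩
  obtain ⟨hint, htend⟩ := integrable_and_tendsto_integral_of_lintegral_sq_le hlim
    (continuous_atomMoment p k l) (by fun_prop : Continuous fun x : AtomSpace ι => x.1 ^ p)
    (fun x => nnnorm_atomMoment_le p x k l)
    (by simpa only [pow_mul'] using (htrace (2 * p)).filter_mono hU)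
  refine ⟨hint, tendsto_nhds_unique htend (tendsto_const_nhds.congr' (hU ?_))⟩
  filter_upwards [eventually_ge_atTop p] with n hn
  exact ((hν n p hn).1 k l).symm

end MomentLimit

section MatrixDensity
open MeasureTheory Matrix
open scoped NNReal Kronecker

section MatrixIntegral

variable {X n 𝕜 : Type*} [RCLike 𝕜] [MeasurableSpace X] {μ : Measure X}
  {M : X → Matrix n n 𝕜}

lemma integrable_dotProduct_mulVec [Fintype n]
    (hint : ∀ i j, Integrable (fun x => M x i j) μ) (u v : n → 𝕜) :
    Integrable (fun x => u ⬝ᵥ M x *ᵥ v) μ :=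
  integrable_finsetSum _ fun i _ =>
    (integrable_finsetSum _ fun j _ => (hint i j).mul_const _).const_mul _

lemma integral_dotProduct_mulVec [Fintype n]
    (hint : ∀ i j, Integrable (fun x => M x i j) μ) (u v : n → 𝕜) :
    ∫ x, u ⬝ᵥ M x *ᵥ v ∂μ = u ⬝ᵥ (Matrix.of fun i j => ∫ x, M x i j ∂μ) *ᵥ v := by
  simp only [dotProduct, mulVec, of_apply]
  rw [integral_finsetSum _ fun i _ =>
    (integrable_finsetSum _ fun j _ => (hint i j).mul_const _).const_mul _]
  refine Finset.sum_congr rfl fun i _ => ?_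
  rw [integral_const_mul, integral_finsetSum _ fun j _ => (hint i j).mul_const _]
  simp only [integral_mul_const]

lemma posSemidef_integral_of_ae [Finite n] (hM : ∀ᵐ x ∂μ, (M x).PosSemidef)
    (hint : ∀ i j, Integrable (fun x => M x i j) μ) :
    (Matrix.of fun i j => ∫ x, M x i j ∂μ).PosSemidef := by
  have := Fintype.ofFinite n
  refine .of_dotProduct_mulVec_nonneg ?_ fun v => ?_
  · ext i j
    simp only [conjTranspose_apply, of_apply, RCLike.star_def, ← integral_conj]
    refine integral_congr_ae ?_
    filter_upwards [hM] with x hx using hx.1.apply i j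
  · rw [← integral_dotProduct_mulVec hint]
    refine integral_nonneg_of_ae ?_
    filter_upwards [hM] with x hx using hx.dotProduct_mulVec_nonneg v

lemma posSemidef_ae_of_forall_setIntegral [Finite n]
    (hint : ∀ i j, Integrable (fun x => M x i j) μ)
    (hM : ∀ s, MeasurableSet s → (Matrix.of fun i j => ∫ x in s, M x i j ∂μ).PosSemidef) :
    ∀ᵐ x ∂μ, (M x).PosSemidef := by
  have := Fintype.ofFinite n
  have hherm : ∀ᵐ x ∂μ, ∀ i j, star (M x j i) = M x i j := by
    refine ae_all_iff.mpr fun i => ae_all_iff.mpr fun j => ?_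
    have hconj := RCLike.conjCLE.integrable_comp_iff.mpr (hint j i)
    refine hconj.ae_eq_of_forall_setIntegral_eq _ _ (hint i j) fun s hs _ => ?_
    exact integral_conj.trans ((hM s hs).1.apply i j)
  have hform (v : n → 𝕜) : ∀ᵐ x ∂μ, 0 ≤ RCLike.re (star v ⬝ᵥ M x *ᵥ v) := by
    have hv := integrable_dotProduct_mulVec hint (star v) v
    refine ae_nonneg_of_forall_setIntegral_nonneg hv.re fun s hs _ => ?_
    rw [integral_re hv.integrableOn, integral_dotProduct_mulVec fun i j => (hint i j).integrableOn]
    exact (hM s hs).re_dotProduct_nonneg v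
  filter_upwards [hherm, ae_all_iff.mpr fun m => hform (TopologicalSpace.denseSeq (n → 𝕜) m)]
    with x hx hdense
  have hxh : (M x).IsHermitian := Matrix.ext hx
  refine .of_dotProduct_mulVec_nonneg hxh fun v => RCLike.nonneg_iff.mpr
    ⟨?_, hxh.im_star_dotProduct_mulVec_self v⟩
  exact isClosed_property (TopologicalSpace.denseRange_denseSeq _)
    (p := fun v => 0 ≤ RCLike.re (star v ⬝ᵥ M x *ᵥ v))
    (isClosed_le continuous_const (by fun_prop)) hdense v

end MatrixIntegral

/-- The matrix measure `H dσ` is positive semidefinite, concentrated on `[0, ∞)` and has moment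
sequence `S`. -/
structure IsStieltjesDensity {ι : Type*} (S : ℕ → Matrix ι ι ℂ) (σ : Measure ℝ)
    (H : ℝ → Matrix ι ι ℂ) : Prop where
  nonneg_ae : ∀ᵐ t ∂σ, 0 ≤ t
  posSemidef_ae : ∀ᵐ t ∂σ, (H t).PosSemidef
  integrable : ∀ p k l, Integrable (fun t : ℝ => (t : ℂ) ^ p * H t k l) σ
  moment : ∀ p k l, ∫ t, (t : ℂ) ^ p * H t k l ∂σ = S p k l

variable {ι : Type*} {S : ℕ → Matrix ι ι ℂ} {σ : Measure ℝ} {H : ℝ → Matrix ι ι ℂ}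

lemma IsStieltjesDensity.posSemidef_blockHankel [Finite ι] (hH : IsStieltjesDensity S σ H)
    (q n : ℕ) : (blockHankel (fun p => S (p + q)) n).PosSemidef := by
  have := Fintype.ofFinite ι
  let a (t : ℝ) (i : Fin n) : ℂ := (t : ℂ) ^ (i : ℕ)
  let M (t : ℝ) : Matrix (Fin n × ι) (Fin n × ι) ℂ :=
    t ^ q • vecMulVec (a t) (star (a t)) ⊗ₖ H t
  have hM : ∀ᵐ t ∂σ, (M t).PosSemidef := by
    filter_upwards [hH.nonneg_ae, hH.posSemidef_ae] with t ht hHt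
    exact ((posSemidef_vecMulVec_self_star (a t)).kronecker hHt).smul (pow_nonneg ht q)
  have hM_apply (x y : Fin n × ι) :
      (fun t => M t x y) = fun t : ℝ => (t : ℂ) ^ (x.1 + y.1 + q : ℕ) * H t x.2 y.2 := by
    ext t
    simp only [M, a, Matrix.smul_apply, kroneckerMap_apply, vecMulVec_apply, Pi.star_apply,
      star_pow, RCLike.star_def, Complex.conj_ofReal, Complex.real_smul, Complex.ofReal_pow]
    ring
  have hHankel : blockHankel (fun p => S (p + q)) n = Matrix.of fun x y => ∫ t, M t x y ∂σ := by
    ext x y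
    rw [of_apply, hM_apply, hH.moment]
    rfl
  rw [hHankel]
  exact posSemidef_integral_of_ae hM fun x y => hM_apply x y ▸ hH.integrable _ _ _

lemma exists_isStieltjesDensity_of_measure [Fintype ι] {ρ : Measure (AtomSpace ι)}
    [IsFiniteMeasure ρ] (hint : ∀ p k l, Integrable (fun x => atomMoment p x k l) ρ)
    (hmoment : ∀ p k l, ∫ x, atomMoment p x k l ∂ρ = S p k l) :
    ∃ σ H, IsStieltjesDensity S σ H := by
  let H (t : ℝ) : Matrix ι ι ℂ := Matrix.of fun k l =>
    ∫ u, vecMulVec u.1 (star u.1) k l ∂ρ.condKernel t.toNNReal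
  have hcoe : MeasurableEmbedding ((↑) : ℝ≥0 → ℝ) :=
    NNReal.isClosedEmbedding_coe.measurableEmbedding
  have hfiber (p : ℕ) (k l : ι) (r : ℝ≥0) :
      ((r : ℝ) : ℂ) ^ p * H r k l = ∫ u, atomMoment p (r, u) k l ∂ρ.condKernel r := by
    simp only [H, of_apply, Real.toNNReal_coe, atomMoment, Matrix.smul_apply, smul_eq_mul,
      integral_const_mul]
  refine ⟨ρ.fst.map (↑), H, ?_, ?_, fun p k l => ?_, fun p k l => ?_⟩
  · exact (hcoe.ae_map_iff).mpr (.of_forall NNReal.coe_nonneg)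
  · refine .of_forall fun t => posSemidef_integral_of_ae
      (.of_forall fun u => posSemidef_vecMulVec_self_star _) fun k l => ?_
    refine Continuous.integrable_of_hasCompactSupport ?_ (.of_compactSpace _)
    fun_prop
  · rw [hcoe.integrable_map_iff]
    simpa only [Function.comp_def, hfiber] using (hint p k l).integral_condKernel
  · rw [hcoe.integral_map, ← hmoment, ← Measure.integral_condKernel (hint p k l)]
    simp only [hfiber]

end MatrixDensity

section WithDensity
open MeasureTheory

variable {X : Type*} [MeasurableSpace X] {σ : Measure X} {s : SignedMeasure X} {g : X → ℝ}

lemma toJordanDecomposition_of_eq_withDensityᵥ (hg : Integrable g σ)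
    (hs : s = σ.withDensityᵥ g) :
    s.toJordanDecomposition.posPart = σ.withDensity (fun x => .ofReal (g x)) ∧
    s.toJordanDecomposition.negPart = σ.withDensity (fun x => .ofReal (-g x)) := by
  obtain ⟨g', hg', hgg'⟩ := hg.1.aemeasurable
  have hpos : σ.withDensity (fun x => .ofReal (g x)) = σ.withDensity (fun x => .ofReal (g' x)) :=
    withDensity_congr_ae (hgg'.fun_comp ENNReal.ofReal)
  have hneg : σ.withDensity (fun x => .ofReal (-g x)) = σ.withDensity (fun x => .ofReal (-g' x)) :=
    withDensity_congr_ae (hgg'.fun_comp fun r => ENNReal.ofReal (-r))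
  rw [hpos, hneg,
    SignedMeasure.toJordanDecomposition_eq_of_eq_add_withDensity (t := 0) hg' (hg.congr hgg')
      VectorMeasure.MutuallySingular.zero_left
      (by rw [zero_add, hs, WithDensityᵥEq.congr_ae hgg'])]
  simp [SignedMeasure.toJordanDecomposition_zero]

variable {E : Type*} [NormedAddCommGroup E] [NormedSpace ℝ E] {f : X → E}

lemma integrable_toJordanDecomposition_iff (hg : Integrable g σ) (hs : s = σ.withDensityᵥ g)
    (hf : AEStronglyMeasurable f σ) :
    Integrable f s.toJordanDecomposition.posPart ∧ Integrable f s.toJordanDecomposition.negPart ↔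
      Integrable (fun x => g x • f x) σ := by
  obtain ⟨hpos, hneg⟩ := toJordanDecomposition_of_eq_withDensityᵥ hg hs
  rw [hpos, hneg, integrable_withDensity_iff_integrable_smul₀' (by fun_prop) (by simp),
    integrable_withDensity_iff_integrable_smul₀' (by fun_prop) (by simp)]
  simp only [ENNReal.toReal_ofReal']
  constructor
  · rintro ⟨hp, hn⟩
    refine (hp.sub hn).congr (.of_forall fun x => ?_)
    simp only [Pi.sub_apply, ← sub_smul, max_zero_sub_max_neg_zero_eq_self]
  · intro h
    have hbound (r : ℝ) : ‖max r 0‖ ≤ ‖r‖ := by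
      rw [Real.norm_of_nonneg (le_max_right r 0)]
      exact max_le (le_abs_self r) (abs_nonneg r)
    refine ⟨h.mono (by fun_prop) (.of_forall fun x => ?_),
      h.mono (by fun_prop) (.of_forall fun x => ?_)⟩ <;> rw [norm_smul, norm_smul] <;> gcongr
    · exact hbound _
    · exact norm_neg (g x) ▸ hbound _

lemma integral_posPart_sub_integral_negPart (hg : Integrable g σ) (hs : s = σ.withDensityᵥ g)
    (hpos : Integrable f s.toJordanDecomposition.posPart)
    (hneg : Integrable f s.toJordanDecomposition.negPart) :
    ∫ x, f x ∂s.toJordanDecomposition.posPart - ∫ x, f x ∂s.toJordanDecomposition.negPart =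
      ∫ x, g x • f x ∂σ := by
  obtain ⟨hpos', hneg'⟩ := toJordanDecomposition_of_eq_withDensityᵥ hg hs
  rw [hpos', integrable_withDensity_iff_integrable_smul₀' (by fun_prop) (by simp)] at hpos
  rw [hneg', integrable_withDensity_iff_integrable_smul₀' (by fun_prop) (by simp)] at hneg
  rw [hpos', hneg', integral_withDensity_eq_integral_toReal_smul₀ (by fun_prop) (by simp),
    integral_withDensity_eq_integral_toReal_smul₀ (by fun_prop) (by simp),
    ← integral_sub hpos hneg]
  refine integral_congr_ae (.of_forall fun x => ?_)
  simp only [ENNReal.toReal_ofReal', ← sub_smul, max_zero_sub_max_neg_zero_eq_self]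

end WithDensity

section ComplexDensity
open MeasureTheory

section General

variable {X : Type*} [MeasurableSpace X] {σ : Measure X} {h : X → ℂ}

lemma re_withDensityᵥ (hh : Integrable h σ) :
    ComplexMeasure.re (σ.withDensityᵥ h) = σ.withDensityᵥ fun x => (h x).re := by
  have hre : Integrable (fun x => (h x).re) σ := hh.re
  ext s hs
  rw [withDensityᵥ_apply hre hs]
  change (σ.withDensityᵥ h s).re = _
  rw [withDensityᵥ_apply hh hs]
  exact (integral_re hh.integrableOn).symm

lemma im_withDensityᵥ (hh : Integrable h σ) :
    ComplexMeasure.im (σ.withDensityᵥ h) = σ.withDensityᵥ fun x => (h x).im := by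
  have him : Integrable (fun x => (h x).im) σ := hh.im
  ext s hs
  rw [withDensityᵥ_apply him hs]
  change (σ.withDensityᵥ h s).im = _
  rw [withDensityᵥ_apply hh hs]
  exact (integral_im hh.integrableOn).symm

lemma eq_withDensityᵥ_rnDeriv {μ : ComplexMeasure X} [SigmaFinite σ]
    (hμ : μ ≪ᵥ σ.toENNRealVectorMeasure) : μ = σ.withDensityᵥ (μ.rnDeriv σ) := by
  obtain ⟨hre, him⟩ := (μ.absolutelyContinuous_ennreal_iff _).mp hμ
  have hh := μ.integrable_rnDeriv σ
  apply ComplexMeasure.equivSignedMeasure.injective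
  refine Prod.ext ?_ ?_
  · exact (SignedMeasure.withDensityᵥ_rnDeriv_eq _ σ hre).symm.trans (re_withDensityᵥ hh).symm
  · exact (SignedMeasure.withDensityᵥ_rnDeriv_eq _ σ him).symm.trans (im_withDensityᵥ hh).symm

lemma exists_forall_eq_withDensityᵥ {α : Type*} [Finite α] (μ : α → ComplexMeasure X) :
    ∃ (σ : Measure X) (h : α → X → ℂ), ∀ i, Integrable (h i) σ ∧ μ i = σ.withDensityᵥ (h i) := by
  have := Fintype.ofFinite α
  let τ (i : α) : Measure X :=
    (ComplexMeasure.re (μ i)).totalVariation + (ComplexMeasure.im (μ i)).totalVariation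
  let σ : Measure X := ∑ i, τ i
  have hτ (i : α) : τ i ≤ σ :=
    Finset.single_le_sum (fun _ _ => Measure.zero_le _) (Finset.mem_univ i)
  have hμ (i : α) : μ i ≪ᵥ σ.toENNRealVectorMeasure := by
    rw [ComplexMeasure.absolutelyContinuous_ennreal_iff,
      SignedMeasure.absolutelyContinuous_ennreal_iff,
      SignedMeasure.absolutelyContinuous_ennreal_iff]
    change _ ≪ VectorMeasure.equivMeasure (VectorMeasure.equivMeasure.symm σ) ∧
      _ ≪ VectorMeasure.equivMeasure (VectorMeasure.equivMeasure.symm σ)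
    rw [Equiv.apply_symm_apply]
    exact ⟨((Measure.le_add_right le_rfl).trans (hτ i)).absolutelyContinuous,
      ((Measure.le_add_left le_rfl).trans (hτ i)).absolutelyContinuous⟩
  exact ⟨σ, fun i => (μ i).rnDeriv σ, fun i =>
    ⟨(μ i).integrable_rnDeriv σ, eq_withDensityᵥ_rnDeriv (hμ i)⟩⟩

end General

section Integral

variable {σ : Measure ℝ} {h f : ℝ → ℂ} {s : Set ℝ}

lemma re_smul_add_I_smul_im_smul (z w : ℂ) :
    z.re • w + Complex.I • z.im • w = w * z := by
  simp only [Complex.real_smul, smul_eq_mul]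
  linear_combination w * z.re_add_im

lemma cmIntegrableWrt_withDensityᵥ_iff (hh : Integrable h σ) (hf : AEStronglyMeasurable f σ) :
    cmIntegrableWrt (σ.withDensityᵥ h) f ↔ Integrable (fun t => f t * h t) σ := by
  have hre := integrable_toJordanDecomposition_iff hh.re (re_withDensityᵥ hh) hf
  have him := integrable_toJordanDecomposition_iff hh.im (im_withDensityᵥ hh) hf
  rw [cmIntegrableWrt, ← and_assoc, hre, him]
  constructor
  · rintro ⟨h₁, h₂⟩
    exact (h₁.add (h₂.smul Complex.I)).congr (.of_forall fun t => re_smul_add_I_smul_im_smul _ _)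
  · intro hfh
    refine ⟨hfh.mono (by fun_prop) ?_, hfh.mono (by fun_prop) ?_⟩ <;>
      refine .of_forall fun t => ?_ <;> rw [norm_smul, norm_mul, mul_comm] <;> gcongr
    · exact RCLike.norm_re_le_norm _
    · exact RCLike.norm_im_le_norm _

lemma cmIntegral_withDensityᵥ (hh : Integrable h σ) (hf : AEStronglyMeasurable f σ)
    (hfh : cmIntegrableWrt (σ.withDensityᵥ h) f) :
    cmIntegral (σ.withDensityᵥ h) f = ∫ t, f t * h t ∂σ := by
  obtain ⟨hre_pos, hre_neg, him_pos, him_neg⟩ := hfh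
  have hre := (integrable_toJordanDecomposition_iff hh.re (re_withDensityᵥ hh) hf).mp
    ⟨hre_pos, hre_neg⟩
  have him := (integrable_toJordanDecomposition_iff hh.im (im_withDensityᵥ hh) hf).mp
    ⟨him_pos, him_neg⟩
  rw [cmIntegral,
    integral_posPart_sub_integral_negPart hh.re (re_withDensityᵥ hh) hre_pos hre_neg,
    integral_posPart_sub_integral_negPart hh.im (im_withDensityᵥ hh) him_pos him_neg,
    ← integral_smul]
  refine (integral_add hre (him.smul Complex.I)).symm.trans (integral_congr_ae ?_)
  exact .of_forall fun t => re_smul_add_I_smul_im_smul _ _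

lemma cmIntegrableWrt_withDensityᵥ_indicator_iff (hh : Integrable h σ) (hs : MeasurableSet s)
    (hf : AEStronglyMeasurable f σ) :
    cmIntegrableWrt (σ.withDensityᵥ h) (s.indicator f) ↔
      IntegrableOn (fun t => f t * h t) s σ := by
  rw [cmIntegrableWrt_withDensityᵥ_iff hh (hf.indicator hs), ← integrable_indicator_iff hs]
  simp only [← Set.indicator_mul_left]

lemma cmIntegral_withDensityᵥ_indicator (hh : Integrable h σ) (hs : MeasurableSet s)
    (hf : AEStronglyMeasurable f σ) (hfh : cmIntegrableWrt (σ.withDensityᵥ h) (s.indicator f)) :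
    cmIntegral (σ.withDensityᵥ h) (s.indicator f) = ∫ t in s, f t * h t ∂σ := by
  rw [cmIntegral_withDensityᵥ hh (hf.indicator hs) hfh, ← integral_indicator hs]
  simp only [← Set.indicator_mul_left]

end Integral

end ComplexDensity

section StieltjesSolution
open MeasureTheory Matrix Set

lemma posSemidef_iff_forall_sum_mul_conj_nonneg {n : Type*} [Fintype n] {A : Matrix n n ℂ} :
    A.PosSemidef ↔ ∀ v : n → ℂ, 0 ≤ ∑ k, ∑ l, v k * (starRingEnd ℂ) (v l) * A k l := by
  have hform (v : n → ℂ) : ∑ k, ∑ l, v k * (starRingEnd ℂ) (v l) * A k l = v ⬝ᵥ A *ᵥ star v := by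
    simp only [dotProduct, mulVec, Finset.mul_sum, Pi.star_apply, RCLike.star_def]
    exact Finset.sum_congr rfl fun k _ => Finset.sum_congr rfl fun l _ => by ring
  simp only [hform]
  refine ⟨fun hA v => by simpa only [star_star] using hA.dotProduct_mulVec_nonneg (star v),
    fun h => ?_⟩
  classical
  rw [← isPositive_toEuclideanLin_iff, LinearMap.isPositive_iff_complex]
  intro x
  have hx : 0 ≤ inner ℂ (A.toEuclideanLin x) x := by
    rw [← inner_conj_symm, starRingEnd_apply, star_nonneg_iff,
      EuclideanSpace.inner_eq_star_dotProduct, dotProduct_comm]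
    simpa only [star_star] using! h (star x.ofLp)
  obtain ⟨hre, him⟩ := Complex.nonneg_iff.mp hx
  exact ⟨Complex.conj_eq_iff_re.mp (Complex.conj_eq_iff_im.mpr him.symm), hre⟩

variable {N : ℕ} {S : ℕ → Matrix (Fin N) (Fin N) ℂ}

lemma IsStieltjesSolution.exists_isStieltjesDensity {μ : Fin N → Fin N → ComplexMeasure ℝ}
    (hμ : IsStieltjesSolution N S μ) : ∃ σ H, IsStieltjesDensity S σ H := by
  obtain ⟨σ, h, hh⟩ := exists_forall_eq_withDensityᵥ fun kl : Fin N × Fin N => μ kl.1 kl.2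
  let H (t : ℝ) : Matrix (Fin N) (Fin N) ℂ := Matrix.of fun k l => h (k, l) t
  have hint (k l : Fin N) : Integrable (fun t => H t k l) σ := (hh (k, l)).1
  have hdensity (k l : Fin N) : μ k l = σ.withDensityᵥ fun t => H t k l := (hh (k, l)).2
  have hcm (p : ℕ) (k l : Fin N) := hdensity k l ▸ hμ.integrable p k l
  refine ⟨σ.restrict (Ici 0), H, ae_restrict_mem measurableSet_Ici, ?_, fun p k l => ?_,
    fun p k l => ?_⟩
  · refine ae_restrict_of_ae (posSemidef_ae_of_forall_setIntegral hint fun s hs => ?_)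
    refine posSemidef_iff_forall_sum_mul_conj_nonneg.mpr fun v => ?_
    simpa only [hdensity, withDensityᵥ_apply (hint _ _) hs, of_apply] using hμ.nonneg v s hs
  · exact (cmIntegrableWrt_withDensityᵥ_indicator_iff (hint k l) measurableSet_Ici
      (by fun_prop)).mp (hcm p k l)
  · rw [← hμ.moment, hdensity, cmIntegral_withDensityᵥ_indicator (hint k l) measurableSet_Ici
      (by fun_prop) (hcm p k l)]

lemma IsStieltjesDensity.isStieltjesSolution {σ : Measure ℝ} {H : ℝ → Matrix (Fin N) (Fin N) ℂ}
    (hH : IsStieltjesDensity S σ H) :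
    IsStieltjesSolution N S fun k l => σ.withDensityᵥ fun t => H t k l := by
  have hint (k l : Fin N) : Integrable (fun t => H t k l) σ := by
    simpa only [pow_zero, one_mul] using hH.integrable 0 k l
  have hrestrict : σ.restrict (Ici 0) = σ := Measure.restrict_eq_self_of_ae_mem hH.nonneg_ae
  have hcm (p : ℕ) (k l : Fin N) : cmIntegrableWrt (σ.withDensityᵥ fun t => H t k l)
      ((Ici 0).indicator fun t : ℝ => (t : ℂ) ^ p) := by
    rw [cmIntegrableWrt_withDensityᵥ_indicator_iff (hint k l) measurableSet_Ici (by fun_prop),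
      IntegrableOn, hrestrict]
    exact hH.integrable p k l
  refine ⟨fun k l s hs hs0 => ?_, fun v s hs => ?_, hcm, fun p k l => ?_⟩
  · rw [withDensityᵥ_apply (hint k l) hs]
    refine setIntegral_measure_zero _ (measure_mono_null (fun t ht => ?_) hH.nonneg_ae)
    exact fun h : 0 ≤ t => h.not_gt (hs0 ht)
  · simp only [withDensityᵥ_apply (hint _ _) hs]
    exact posSemidef_iff_forall_sum_mul_conj_nonneg.mp (posSemidef_integral_of_ae
      (ae_restrict_of_ae hH.posSemidef_ae) fun k l => (hint k l).integrableOn) v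
  · rw [cmIntegral_withDensityᵥ_indicator (hint k l) measurableSet_Ici (by fun_prop) (hcm p k l),
      hrestrict, hH.moment]

end StieltjesSolution

theorem stieltjes_moment_problem_solvable_iff_general
    (N : ℕ) (S : ℕ → Matrix (Fin N) (Fin N) ℂ) :
    (∃ μ : Fin N → Fin N → MeasureTheory.ComplexMeasure ℝ, IsStieltjesSolution N S μ) ↔
      (∀ n : ℕ,
        (Matrix.of fun p q : Fin (n + 1) × Fin N =>
          S ((p.1 : ℕ) + (q.1 : ℕ)) p.2 q.2).PosSemidef ∧
        (Matrix.of fun p q : Fin (n + 1) × Fin N =>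
          S ((p.1 : ℕ) + (q.1 : ℕ) + 1) p.2 q.2).PosSemidef) := by
  constructor
  · rintro ⟨μ, hμ⟩ n
    obtain ⟨σ, H, hH⟩ := hμ.exists_isStieltjesDensity
    exact ⟨hH.posSemidef_blockHankel 0 (n + 1), hH.posSemidef_blockHankel 1 (n + 1)⟩
  · intro h
    have hS (n : ℕ) : (blockHankel S n).PosSemidef :=
      (h n).1.submatrix (Prod.map Fin.castSucc id)
    have hS' (n : ℕ) : (blockHankel (fun p => S (p + 1)) n).PosSemidef :=
      (h n).2.submatrix (Prod.map Fin.castSucc id)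
    obtain ⟨ρ, hρ⟩ := exists_measure_forall_integral_atomMoment_eq hS hS'
    obtain ⟨σ, H, hH⟩ := exists_isStieltjesDensity_of_measure
      (fun p k l => (hρ p k l).1) (fun p k l => (hρ p k l).2)
    exact ⟨_, hH.isStieltjesSolution⟩

/-- Theorem 2.2 of the paper.  The matrix Stieltjes moment problem for
a sequence `(S n)` of Hermitian `N×N` complex matrices has a solution iff for every
`n ∈ ℕ` both block Hankel matrices `Γ n = (S (i+j))_{i,j ≤ n}` and
`Γ̃ n = (S (i+j+1))_{i,j ≤ n}` — viewed as complex matrices of size `(n+1)·N` indexed by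
`Fin (n+1) × Fin N` — are positive semidefinite. -/
theorem stieltjes_moment_problem_solvable_iff
    (N : ℕ) (hN : 1 ≤ N) (S : ℕ → Matrix (Fin N) (Fin N) ℂ)
    (hherm : ∀ n, (S n).IsHermitian) :
    (∃ μ : Fin N → Fin N → MeasureTheory.ComplexMeasure ℝ, IsStieltjesSolution N S μ) ↔
      (∀ n : ℕ,
        (Matrix.of fun p q : Fin (n + 1) × Fin N =>
          S ((p.1 : ℕ) + (q.1 : ℕ)) p.2 q.2).PosSemidef ∧
        (Matrix.of fun p q : Fin (n + 1) × Fin N =>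
          S ((p.1 : ℕ) + (q.1 : ℕ) + 1) p.2 q.2).PosSemidef) :=
  stieltjes_moment_problem_solvable_iff_general N S
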